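/- For every integer n ≥ 2, the diameter of the space Tree(n) of labeled rooted binary trees of complexity n, in the metric of simultaneous Whitehead moves, is at most C·log(n) for a universal constant C. -/

import Mathlib

/-- A labeled rooted binary tree: leaves carry natural-number labels; an internal
node has a left and a right child subtree.  (The root edge is the edge above the
top node.) -/
inductive LTree : Type
  | leaf : ℕ → LTree
  | node : LTree → LTree → LTree
deriving DecidableEq

namespace LTree

/-- The multiset of labels at the ends of a tree. -/
def labels : LTree → Multiset ℕ
  | leaf a => {a}
  | node l r => labels l + labels r

/-- The number of ends of a tree. -/
def numEnds (t : LTree) : ℕ := (labels t).card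

/-- The `k`-th binary digit of `x`, counting from the right starting at `1`. -/
def digit (k x : ℕ) : ℕ := x / 2 ^ (k - 1) % 2

/-- All labels of `t` agree on the binary digits `k+1` through `d`. -/
def agreeAbove (d k : ℕ) (t : LTree) : Prop :=
  ∀ a ∈ labels t, ∀ b ∈ labels t, ∀ i, k < i → i ≤ d → digit i a = digit i b

/-- An edge (identified with the subtree it roots) is `k`-sorted if the digits
`k+1` through `d` of all its labels agree and either (a1) all labels have the same
`k`-th digit, or (a2) all labels with `k`-th digit `0` are ends of the left child
subtree and all labels with `k`-th digit `1` are ends of the right child subtree. -/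
def kSorted (d k : ℕ) : LTree → Prop
  | leaf a => agreeAbove d k (leaf a) ∧
      (∀ x ∈ labels (leaf a), ∀ y ∈ labels (leaf a), digit k x = digit k y)
  | node l r => agreeAbove d k (node l r) ∧
      ((∀ x ∈ labels (node l r), ∀ y ∈ labels (node l r), digit k x = digit k y) ∨
        ((∀ x ∈ labels l, digit k x = 0) ∧ (∀ x ∈ labels r, digit k x = 1)))

/-- A tree is fully-sorted if every edge `e` is `d_e`-sorted, where `d_e` is the
number of binary digits of the number of ends of `T_e`. -/
def fullySorted (d : ℕ) : LTree → Prop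
  | leaf a => kSorted d (Nat.size (numEnds (leaf a))) (leaf a)
  | node l r => kSorted d (Nat.size (numEnds (node l r))) (node l r) ∧
      fullySorted d l ∧ fullySorted d r

/-- Add `c` to every label. -/
def addLabel (c : ℕ) : LTree → LTree
  | leaf a => leaf (a + c)
  | node l r => node (addLabel c l) (addLabel c r)

/-- The canonical fully-sorted tree `T_n`: `T_0` is a single labeled end; for
`n ≥ 1`, with `m` largest such that `2^m ≤ n` and `k = n - 2^m`, the left subtree
is the full tree `T_{2^m - 1}` and the right subtree is `T_k` with `2^m` added to
all labels. -/
def Tn : ℕ → LTree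
  | 0 => leaf 0
  | n + 1 =>
      node (Tn (2 ^ Nat.log 2 (n + 1) - 1))
        (addLabel (2 ^ Nat.log 2 (n + 1)) (Tn (n + 1 - 2 ^ Nat.log 2 (n + 1))))
decreasing_by
  · have h1 : 2 ^ Nat.log 2 (n + 1) ≤ n + 1 := Nat.pow_log_le_self 2 (Nat.succ_ne_zero n)
    omega
  · have h1 : 1 ≤ 2 ^ Nat.log 2 (n + 1) := Nat.one_le_two_pow
    omega

end LTree

namespace LTree

/-- One simultaneous Whitehead move (labeled trees are considered up to root- and
label-preserving homeomorphism, so children may be swapped for free).  The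
constructors `white*` perform a Whitehead move at an interior edge (collapse and
re-expand in one of the two other directions); the recursive arguments allow
further Whitehead moves at pairwise disjoint (vertex-disjoint) interior edges,
which necessarily lie strictly inside the subtrees `a`, `b`, `c`. -/
inductive SimMove : LTree → LTree → Prop
  | leaf (a : ℕ) : SimMove (leaf a) (leaf a)
  | node {l l' r r' : LTree} : SimMove l l' → SimMove r r' →
      SimMove (node l r) (node l' r')
  | swap {l l' r r' : LTree} : SimMove l l' → SimMove r r' →
      SimMove (node l r) (node r' l')
  | whiteL1 {a a' b b' c c' : LTree} : SimMove a a' → SimMove b b' → SimMove c c' →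
      SimMove (node (node a b) c) (node (node a' c') b')
  | whiteL2 {a a' b b' c c' : LTree} : SimMove a a' → SimMove b b' → SimMove c c' →
      SimMove (node (node a b) c) (node (node b' c') a')
  | whiteR1 {a a' b b' c c' : LTree} : SimMove a a' → SimMove b b' → SimMove c c' →
      SimMove (node c (node a b)) (node b' (node a' c'))
  | whiteR2 {a a' b b' c c' : LTree} : SimMove a a' → SimMove b b' → SimMove c c' →
      SimMove (node c (node a b)) (node a' (node b' c'))

end LTree

namespace LTree

/-- `Iter R k a b`: `b` is reached from `a` by exactly `k` steps of `R`. -/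
inductive Iter {α : Type} (R : α → α → Prop) : ℕ → α → α → Prop
  | zero (a : α) : Iter R 0 a a
  | succ {k : ℕ} {a b c : α} : R a b → Iter R k b c → Iter R (k + 1) a c

namespace Iter

variable {α : Type} {R : α → α → Prop}

theorem trans {j k : ℕ} {a b c : α} (h : Iter R j a b) (h' : Iter R k b c) :
    Iter R (j + k) a c := by
  induction h with
  | zero => simpa using h'
  | succ hs _ ih => rw [Nat.add_right_comm]; exact .succ hs (ih h')

theorem single {a b : α} (h : R a b) : Iter R 1 a b := .succ h (.zero b)

theorem refl_of (hR : ∀ a, R a a) (k : ℕ) (a : α) : Iter R k a a := by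
  induction k with
  | zero => exact .zero a
  | succ k ih => exact .succ (hR a) ih

theorem zero_eq {a b : α} (h : Iter R 0 a b) : a = b := by
  cases h; rfl

theorem succ_inv {k : ℕ} {a c : α} (h : Iter R (k + 1) a c) : ∃ b, R a b ∧ Iter R k b c := by
  cases h with
  | succ h₁ h₂ => exact ⟨_, h₁, h₂⟩

theorem four_inv {a e : α} (h : Iter R 4 a e) :
    ∃ b c d, R a b ∧ R b c ∧ R c d ∧ R d e := by
  obtain ⟨b, hb, h⟩ := h.succ_inv
  obtain ⟨c, hc, h⟩ := h.succ_inv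
  obtain ⟨d, hd, h⟩ := h.succ_inv
  obtain ⟨e', he, h⟩ := h.succ_inv
  obtain rfl := h.zero_eq
  exact ⟨b, c, d, hb, hc, hd, he⟩

theorem map_two {f : α → α → α}
    (hf : ∀ {a a' b b'}, R a a' → R b b' → R (f a b) (f a' b')) {k : ℕ} {a a' b b' : α}
    (h : Iter R k a a') (h' : Iter R k b b') : Iter R k (f a b) (f a' b') := by
  induction h generalizing b with
  | zero => obtain rfl := h'.zero_eq; exact .zero _
  | succ hs _ ih =>
    obtain ⟨c, hc, h'⟩ := h'.succ_inv
    exact .succ (hf hs hc) (ih h')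

theorem reverse (hR : ∀ a b, R a b → Iter R 2 b a) {k : ℕ} {a b : α} (h : Iter R k a b) :
    Iter R (2 * k) b a := by
  induction h with
  | zero => exact .zero _
  | succ hs _ ih => exact ih.trans (hR _ _ hs)

theorem exists_chain {k : ℕ} {a b : α} (h : Iter R k a b) :
    ∃ f : ℕ → α, f 0 = a ∧ f k = b ∧ ∀ i < k, R (f i) (f (i + 1)) := by
  induction h with
  | zero a => exact ⟨fun _ => a, rfl, rfl, by simp⟩
  | @succ k a b c hs _ ih =>
    obtain ⟨f, h0, hk, hf⟩ := ih
    refine ⟨fun i => Nat.casesOn i a f, rfl, hk, ?_⟩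
    rintro (_ | i) hi
    · simpa [h0] using hs
    · exact hf i (by omega)

end Iter

theorem SimMove.refl (t : LTree) : SimMove t t := by
  induction t with
  | leaf a => exact .leaf a
  | node l r hl hr => exact .node hl hr

theorem SimMove.labels_eq {t t' : LTree} (h : SimMove t t') : labels t = labels t' := by
  induction h <;> simp only [labels, *] <;> abel

theorem SimMove.reverse {t t' : LTree} (h : SimMove t t') :
    ∃ u, SimMove t' u ∧ SimMove u t := by
  induction h with
  | leaf a => exact ⟨_, .leaf a, .leaf a⟩
  | node _ _ hl hr =>
    obtain ⟨u, hu, hu'⟩ := hl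
    obtain ⟨v, hv, hv'⟩ := hr
    exact ⟨_, .node hu hv, .node hu' hv'⟩
  | swap _ _ hl hr =>
    obtain ⟨u, hu, hu'⟩ := hl
    obtain ⟨v, hv, hv'⟩ := hr
    exact ⟨_, .swap hv hu, .node hu' hv'⟩
  | whiteL1 _ _ _ ha hb hc =>
    obtain ⟨u, hu, hu'⟩ := ha
    obtain ⟨v, hv, hv'⟩ := hb
    obtain ⟨w, hw, hw'⟩ := hc
    exact ⟨_, .whiteL1 hu hw hv, .node (.node hu' hv') hw'⟩
  | whiteL2 _ _ _ ha hb hc =>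
    obtain ⟨u, hu, hu'⟩ := ha
    obtain ⟨v, hv, hv'⟩ := hb
    obtain ⟨w, hw, hw'⟩ := hc
    exact ⟨_, .whiteL1 hv hw hu, .node (.swap hv' hu') hw'⟩
  | whiteR1 _ _ _ ha hb hc =>
    obtain ⟨u, hu, hu'⟩ := ha
    obtain ⟨v, hv, hv'⟩ := hb
    obtain ⟨w, hw, hw'⟩ := hc
    exact ⟨_, .whiteR1 hu hw hv, .node hw' (.node hu' hv')⟩
  | whiteR2 _ _ _ ha hb hc =>
    obtain ⟨u, hu, hu'⟩ := ha
    obtain ⟨v, hv, hv'⟩ := hb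
    obtain ⟨w, hw, hw'⟩ := hc
    exact ⟨_, .whiteR1 hv hw hu, .node hw' (.swap hv' hu')⟩

theorem SimMove.iter_reverse (t t' : LTree) (h : SimMove t t') : Iter SimMove 2 t' t := by
  obtain ⟨u, hu, hu'⟩ := h.reverse
  exact .succ hu (.single hu')

theorem labels_eq_of_iter {k : ℕ} {t t' : LTree} (h : Iter SimMove k t t') :
    labels t = labels t' := by
  induction h with
  | zero => rfl
  | succ hs _ ih => exact hs.labels_eq.trans ih

/-! ### Balancing -/

/-- The height of a tree. -/
def height : LTree → ℕ
  | leaf _ => 0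
  | node l r => max (height l) (height r) + 1

/-- `Clustered r t m`: `t` is a binary tree whose `m` ends are replaced by trees of
height at most `r`. -/
inductive Clustered (r : ℕ) : LTree → ℕ → Prop
  | base {t : LTree} : height t ≤ r → Clustered r t 1
  | node {t₁ t₂ : LTree} {m₁ m₂ : ℕ} : Clustered r t₁ m₁ → Clustered r t₂ m₂ →
      Clustered r (node t₁ t₂) (m₁ + m₂)

theorem clustered_numEnds (t : LTree) : Clustered 0 t (numEnds t) := by
  induction t with
  | leaf a => simpa [numEnds, labels] using Clustered.base (t := leaf a) (r := 0) le_rfl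
  | node l r hl hr => simpa [numEnds, labels] using hl.node hr

/-- One simultaneous move takes `t`, with `m` clusters of height at most `r`, to a tree
with `m'` clusters of height at most `r + 1` such that `4 * m' + e ≤ 3 * m`. -/
def Shrinks (r e : ℕ) (t : LTree) (m : ℕ) : Prop :=
  ∃ t' m', SimMove t t' ∧ Clustered (r + 1) t' m' ∧ 4 * m' + e ≤ 3 * m

/-- The tree `t` has a single cluster beside a subtree that shrinks. -/
def ChainStart (r : ℕ) (t : LTree) (m : ℕ) : Prop :=
  ∃ x w p, height x ≤ r ∧ Shrinks r 2 w p ∧ m = p + 1 ∧ (t = node x w ∨ t = node w x)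

theorem Clustered.base_succ {r : ℕ} {t : LTree} (h : height t ≤ r) : Clustered (r + 1) t 1 :=
  .base (by omega)

theorem Clustered.pair_succ {r : ℕ} {t u : LTree} (h : height t ≤ r) (h' : height u ≤ r) :
    Clustered (r + 1) (LTree.node t u) 1 :=
  .base (by simp only [height]; omega)

theorem ChainStart.shrinks {r m : ℕ} {t : LTree} (h : ChainStart r t m) : Shrinks r 1 t m := by
  obtain ⟨x, w, p, hx, ⟨w', p', hs, hc, hp⟩, rfl, rfl | rfl⟩ := h
  · exact ⟨_, _, .node (.refl x) hs, .node (.base_succ hx) hc, by omega⟩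
  · exact ⟨_, _, .node hs (.refl x), .node hc (.base_succ hx), by omega⟩

theorem ChainStart.shrinks_node_left {r m : ℕ} {t y : LTree} (hy : height y ≤ r)
    (h : ChainStart r t m) : Shrinks r 2 (node y t) (1 + m) := by
  obtain ⟨x, w, p, hx, ⟨w', p', hs, hc, hp⟩, rfl, rfl | rfl⟩ := h
  · exact ⟨_, _, .whiteR1 (.refl x) hs (.refl y), .node hc (.pair_succ hx hy), by omega⟩
  · exact ⟨_, _, .whiteR2 hs (.refl x) (.refl y), .node hc (.pair_succ hx hy), by omega⟩

theorem ChainStart.shrinks_node_right {r m : ℕ} {t y : LTree} (hy : height y ≤ r)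
    (h : ChainStart r t m) : Shrinks r 2 (node t y) (m + 1) := by
  obtain ⟨x, w, p, hx, ⟨w', p', hs, hc, hp⟩, rfl, rfl | rfl⟩ := h
  · exact ⟨_, _, .whiteL1 (.refl x) hs (.refl y), .node (.pair_succ hx hy) hc, by omega⟩
  · exact ⟨_, _, .whiteL2 hs (.refl x) (.refl y), .node (.pair_succ hx hy) hc, by omega⟩

theorem Shrinks.mono {r e e' m : ℕ} {t : LTree} (he : e' ≤ e) (h : Shrinks r e t m) :
    Shrinks r e' t m := by
  obtain ⟨t', m', hs, hc, hm⟩ := h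
  exact ⟨t', m', hs, hc, by omega⟩

theorem Shrinks.node {r m₁ m₂ : ℕ} {t₁ t₂ : LTree} (h₁ : Shrinks r 1 t₁ m₁)
    (h₂ : Shrinks r 1 t₂ m₂) : Shrinks r 2 (node t₁ t₂) (m₁ + m₂) := by
  obtain ⟨t₁', m₁', hs₁, hc₁, hm₁⟩ := h₁
  obtain ⟨t₂', m₂', hs₂, hc₂, hm₂⟩ := h₂
  exact ⟨_, _, .node hs₁ hs₂, .node hc₁ hc₂, by omega⟩

theorem Clustered.trichotomy {r m : ℕ} {t : LTree} (h : Clustered r t m) :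
    (height t ≤ r ∧ m = 1) ∨ Shrinks r 2 t m ∨ ChainStart r t m := by
  induction h with
  | base h => exact .inl ⟨h, rfl⟩
  | node _ _ ih₁ ih₂ =>
    right
    have weak : ∀ {t m}, Shrinks r 2 t m ∨ ChainStart r t m → Shrinks r 1 t m := fun h =>
      h.elim (Shrinks.mono (by omega)) ChainStart.shrinks
    rcases ih₁ with ⟨h₁, rfl⟩ | h₁
    · rcases ih₂ with ⟨h₂, rfl⟩ | h₂ | h₂
      · exact .inl ⟨_, _, .refl _, .pair_succ h₁ h₂, by omega⟩
      · exact .inr ⟨_, _, _, h₁, h₂, by omega, .inl rfl⟩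
      · exact .inl (h₂.shrinks_node_left h₁)
    · rcases ih₂ with ⟨h₂, rfl⟩ | h₂
      · rcases h₁ with h₁ | h₁
        · exact .inr ⟨_, _, _, h₂, h₁, by omega, .inr rfl⟩
        · exact .inl (h₁.shrinks_node_right h₂)
      · exact .inl ((weak h₁).node (weak h₂))

theorem Clustered.exists_simMove {r m : ℕ} {t : LTree} (h : Clustered r t m) :
    ∃ t' m', SimMove t t' ∧ Clustered (r + 1) t' m' ∧ (m' = 1 ∨ 4 * m' ≤ 3 * m) := by
  rcases h.trichotomy with ⟨hh, rfl⟩ | ⟨t', m', hs, hc, hm⟩ | h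
  · exact ⟨t, 1, .refl t, .base_succ hh, .inl rfl⟩
  · exact ⟨t', m', hs, hc, .inr (by omega)⟩
  · obtain ⟨t', m', hs, hc, hm⟩ := h.shrinks
    exact ⟨t', m', hs, hc, .inr (by omega)⟩

theorem Clustered.height_le_of_eq_one {r m : ℕ} {t : LTree} (h : Clustered r t m) :
    0 < m ∧ (m = 1 → height t ≤ r) := by
  induction h with
  | base h => exact ⟨one_pos, fun _ => h⟩
  | node _ _ ih₁ ih₂ => exact ⟨by omega, fun h => by omega⟩

theorem Clustered.exists_balanced (j : ℕ) {r m : ℕ} {t : LTree} (h : Clustered r t m)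
    (hm : m ≤ 2 ^ j) : ∃ t', Iter SimMove (3 * j) t t' ∧ height t' ≤ r + 3 * j := by
  induction j generalizing r m t with
  | zero =>
    obtain ⟨h₀, h₁⟩ := h.height_le_of_eq_one
    exact ⟨t, .zero t, h₁ (by simp at hm; omega)⟩
  | succ j ih =>
    obtain ⟨t₁, m₁, hs₁, hc₁, hm₁⟩ := h.exists_simMove
    obtain ⟨t₂, m₂, hs₂, hc₂, hm₂⟩ := hc₁.exists_simMove
    obtain ⟨t₃, m₃, hs₃, hc₃, hm₃⟩ := hc₂.exists_simMove
    have hj : 1 ≤ 2 ^ j := Nat.one_le_two_pow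
    rw [pow_succ] at hm
    obtain ⟨t', ht', hh⟩ := ih hc₃ (by omega)
    exact ⟨t', .succ hs₁ (.succ hs₂ (.succ hs₃ ht')), by omega⟩

theorem exists_balanced {j : ℕ} {t : LTree} (h : numEnds t ≤ 2 ^ j) :
    ∃ t', Iter SimMove (3 * j) t t' ∧ height t' ≤ 3 * j := by
  simpa using (clustered_numEnds t).exists_balanced j h

/-! ### Possibly empty trees -/

/-- The tree with two possibly empty children; an empty child is suppressed. -/
def join : Option LTree → Option LTree → Option LTree
  | none, b => b
  | some a, none => some a
  | some a, some b => some (node a b)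

/-- Simultaneous moves of possibly empty trees. -/
inductive OptMove : Option LTree → Option LTree → Prop
  | none : OptMove none none
  | some {t t' : LTree} : SimMove t t' → OptMove (some t) (some t')

namespace OptMove

theorem refl (a : Option LTree) : OptMove a a := by
  cases a with
  | none => exact .none
  | some t => exact .some (.refl t)

variable {a a' b b' c c' : Option LTree}

theorem join (ha : OptMove a a') (hb : OptMove b b') :
    OptMove (join a b) (LTree.join a' b') := by
  cases ha <;> cases hb <;> constructor <;> first | assumption | (constructor <;> assumption)

theorem swap (ha : OptMove a a') (hb : OptMove b b') :
    OptMove (LTree.join a b) (LTree.join b' a') := by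
  cases ha <;> cases hb <;> constructor <;>
    first | assumption | (apply SimMove.swap <;> assumption)

theorem whiteL1 (ha : OptMove a a') (hb : OptMove b b') (hc : OptMove c c') :
    OptMove (LTree.join (LTree.join a b) c) (LTree.join (LTree.join a' c') b') := by
  cases ha with
  | none => exact swap hb hc
  | some ha =>
    cases hb with
    | none => cases hc with
      | none => exact .some ha
      | some hc => exact .some (.node ha hc)
    | some hb => cases hc with
      | none => exact .some (.node ha hb)
      | some hc => exact .some (.whiteL1 ha hb hc)

theorem whiteR1 (ha : OptMove a a') (hb : OptMove b b') (hc : OptMove c c') :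
    OptMove (LTree.join c (LTree.join a b)) (LTree.join b' (LTree.join a' c')) := by
  cases hc with
  | none => cases ha with
    | none => cases hb with
      | none => exact .none
      | some hb => exact .some hb
    | some ha => cases hb with
      | none => exact .some ha
      | some hb => exact .some (.swap ha hb)
  | some hc =>
    cases ha with
    | none => exact swap (.some hc) hb
    | some ha => cases hb with
      | none => exact .some (.swap hc ha)
      | some hb => exact .some (.whiteR1 ha hb hc)

end OptMove

theorem iter_optMove_refl (k : ℕ) (a : Option LTree) : Iter OptMove k a a :=
  .refl_of OptMove.refl k a

theorem iter_optMove_some {k : ℕ} {t t' : LTree} (h : Iter OptMove k (some t) (some t')) :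
    Iter SimMove k t t' := by
  induction k generalizing t with
  | zero =>
    obtain rfl := Option.some_injective _ h.zero_eq
    exact .zero _
  | succ k ih =>
    obtain ⟨b, hb, h⟩ := h.succ_inv
    cases hb with
    | some hs => exact .succ hs (ih h)

theorem isSome_of_iter_optMove {k : ℕ} {a b : Option LTree} (h : Iter OptMove k a b)
    (ha : a.isSome) : b.isSome := by
  induction h with
  | zero => exact ha
  | succ hs _ ih => cases hs with
    | none => simp at ha
    | some _ => exact ih rfl

/-- Four moves exchange the two middle grandchildren, while all four grandchildren undergo
arbitrary moves of their own. -/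
theorem iter_interchange {a a' b b' c c' d d' : Option LTree}
    (ha : Iter OptMove 4 a a') (hb : Iter OptMove 4 b b')
    (hc : Iter OptMove 4 c c') (hd : Iter OptMove 4 d d') :
    Iter OptMove 4 (join (join a b) (join c d)) (join (join a' c') (join b' d')) := by
  obtain ⟨a₁, a₂, a₃, ha₁, ha₂, ha₃, ha₄⟩ := ha.four_inv
  obtain ⟨b₁, b₂, b₃, hb₁, hb₂, hb₃, hb₄⟩ := hb.four_inv
  obtain ⟨c₁, c₂, c₃, hc₁, hc₂, hc₃, hc₄⟩ := hc.four_inv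
  obtain ⟨d₁, d₂, d₃, hd₁, hd₂, hd₃, hd₄⟩ := hd.four_inv
  exact .succ (.whiteL1 ha₁ hb₁ (.join hc₁ hd₁)) <|
    .succ (.join (.whiteR1 hc₂ hd₂ ha₂) hb₂) <|
    .succ (.whiteL1 hd₃ (.join hc₃ ha₃) hb₃) <|
    .single (.swap (.swap hd₄ hb₄) (.swap hc₄ ha₄))

/-! ### Pipelined sorting -/

/-- The binary trie of those labels in `S` whose quotient by `2 ^ d` is `p`. -/
def trie (S : Multiset ℕ) : ℕ → ℕ → Option LTree
  | 0, p => if p ∈ S then some (leaf p) else none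
  | d + 1, p => join (trie S d (2 * p)) (trie S d (2 * p + 1))

/-- `Sortable S s d p a`: the possibly empty tree `a` splits according to the binary digit `d`
within `s` moves, after which every further digit takes at most four moves, resulting in
`trie S d p`. -/
def Sortable (S : Multiset ℕ) : ℕ → ℕ → ℕ → Option LTree → Prop
  | _, 0, p, a => a = trie S 0 p
  | s, d + 1, p, a => ∃ a₀ a₁, Iter OptMove s a (join a₀ a₁) ∧
      Sortable S 4 d (2 * p) a₀ ∧ Sortable S 4 d (2 * p + 1) a₁

theorem Sortable.advance {S : Multiset ℕ} {d p : ℕ} {a : Option LTree}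
    (h : Sortable S 4 d p a) : ∃ a', Iter OptMove 4 a a' ∧ Sortable S 0 d p a' := by
  cases d with
  | zero => exact ⟨a, iter_optMove_refl 4 a, h⟩
  | succ d =>
    obtain ⟨a₀, a₁, ha, h₀, h₁⟩ := h
    exact ⟨_, ha, a₀, a₁, .zero _, h₀, h₁⟩

theorem Sortable.iter_trie {S : Multiset ℕ} {s d p : ℕ} {a : Option LTree}
    (h : Sortable S s d p a) : Iter OptMove (s + 4 * d) a (trie S d p) := by
  induction d generalizing s p a with
  | zero => cases h; exact iter_optMove_refl _ _
  | succ d ih =>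
    obtain ⟨a₀, a₁, ha, h₀, h₁⟩ := h
    convert ha.trans (Iter.map_two OptMove.join (ih h₀) (ih h₁)) using 1
    · ring
    · rfl

theorem Sortable.join {S₁ S₂ : Multiset ℕ} (hS : Disjoint S₁ S₂) {s d p : ℕ}
    {a b : Option LTree} (ha : Sortable S₁ s d p a) (hb : Sortable S₂ s d p b) :
    Sortable (S₁ + S₂) (s + 4) d p (join a b) := by
  induction d generalizing s p a b with
  | zero =>
    rw [Multiset.disjoint_left] at hS
    simp only [Sortable, trie] at ha hb ⊢
    subst ha hb
    by_cases h₁ : p ∈ S₁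
    · simp [h₁, hS h₁, LTree.join]
    · by_cases h₂ : p ∈ S₂ <;> simp [h₁, h₂, LTree.join]
  | succ d ih =>
    obtain ⟨a₀, a₁, ha, ha₀, ha₁⟩ := ha
    obtain ⟨b₀, b₁, hb, hb₀, hb₁⟩ := hb
    obtain ⟨a₀', ia₀, ha₀⟩ := ha₀.advance
    obtain ⟨a₁', ia₁, ha₁⟩ := ha₁.advance
    obtain ⟨b₀', ib₀, hb₀⟩ := hb₀.advance
    obtain ⟨b₁', ib₁, hb₁⟩ := hb₁.advance
    exact ⟨_, _, (Iter.map_two OptMove.join ha hb).trans (iter_interchange ia₀ ia₁ ib₀ ib₁),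
      ih ha₀ hb₀, ih ha₁ hb₁⟩

theorem sortable_leaf (x s d p : ℕ) :
    Sortable {x} s d p (if x / 2 ^ d = p then some (leaf x) else none) := by
  induction d generalizing s p with
  | zero =>
    by_cases h : x = p
    · simp [Sortable, trie, h]
    · simp [Sortable, trie, h, Ne.symm h]
  | succ d ih =>
    refine ⟨_, _, ?_, ih 4 (2 * p), ih 4 (2 * p + 1)⟩
    rw [pow_succ, ← Nat.div_div_eq_div_mul]
    generalize x / 2 ^ d = y
    convert iter_optMove_refl s _ using 1
    split_ifs <;> first | rfl | omega

theorem sortable_of_height_le {t : LTree} {h d : ℕ} (hh : height t ≤ h)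
    (hd : (labels t).Nodup) (hlt : ∀ x ∈ labels t, x < 2 ^ d) :
    Sortable (labels t) (4 * h) d 0 (some t) := by
  induction t generalizing h with
  | leaf x =>
    have hx : x / 2 ^ d = 0 := Nat.div_eq_of_lt (hlt x (by simp [labels]))
    simpa [hx, labels] using sortable_leaf x (4 * h) d 0
  | node l r hl hr =>
    simp only [height] at hh
    simp only [labels, Multiset.mem_add] at hd hlt
    obtain ⟨hdl, hdr, hdis⟩ := Multiset.nodup_add.mp hd
    obtain ⟨h, rfl⟩ : ∃ h', h = h' + 1 := ⟨h - 1, by omega⟩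
    exact (hl (by omega) hdl fun x hx => hlt x (.inl hx)).join hdis
      (hr (by omega) hdr fun x hx => hlt x (.inr hx))

theorem iter_trie_of_labels {n j : ℕ} (hn : n < 2 ^ j) {t : LTree}
    (ht : labels t = Multiset.range (n + 1)) :
    ∃ u, trie (Multiset.range (n + 1)) j 0 = some u ∧ Iter SimMove (19 * j) t u := by
  obtain ⟨t', hb, hh⟩ := exists_balanced (t := t) (j := j) (by simp [numEnds, ht]; omega)
  have ht' : labels t' = Multiset.range (n + 1) := (labels_eq_of_iter hb).symm.trans ht
  have hs := (sortable_of_height_le (d := j) hh (ht' ▸ Multiset.nodup_range _)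
    (fun x hx => by rw [ht', Multiset.mem_range] at hx; omega)).iter_trie
  rw [ht'] at hs
  obtain ⟨u, hu⟩ := Option.isSome_iff_exists.mp (isSome_of_iter_optMove hs rfl)
  rw [hu] at hs
  refine ⟨u, hu, ?_⟩
  convert hb.trans (iter_optMove_some hs) using 1
  ring

theorem iter_of_labels_eq_range {n j : ℕ} (hn : n < 2 ^ j) {t t' : LTree}
    (ht : labels t = Multiset.range (n + 1)) (ht' : labels t' = Multiset.range (n + 1)) :
    Iter SimMove (57 * j) t t' := by
  obtain ⟨u, hu, h⟩ := iter_trie_of_labels hn ht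
  obtain ⟨u', hu', h'⟩ := iter_trie_of_labels hn ht'
  obtain rfl : u = u' := Option.some_injective _ (hu.symm.trans hu')
  convert h.trans (h'.reverse SimMove.iter_reverse) using 1
  ring

end LTree

theorem natLog_two_add_one_le {n : ℕ} (hn : 2 ≤ n) :
    (57 * (Nat.log 2 n + 1) : ℕ) ≤ 200 * Real.log n := by
  have h₁ : 1 ≤ Nat.log 2 n := Nat.log_pos one_lt_two hn
  have h₂ : (Nat.log 2 n : ℝ) * Real.log 2 ≤ Real.log n := by
    rw [← Real.log_pow]
    exact Real.log_le_log (by positivity) (mod_cast Nat.pow_log_le_self 2 (by omega))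
  have h₃ : (1 : ℝ) ≤ Nat.log 2 n := mod_cast h₁
  push_cast
  nlinarith [Real.log_two_gt_d9]

open LTree in
/-- There is a universal constant `C` such that for every `n ≥ 2`, any two labeled
rooted binary trees of complexity `n` (ends labeled bijectively by `{0, …, n}`)
are connected by a chain of at most `C * log n` simultaneous Whitehead moves:
the diameter of `Tree(n)` in the metric `d_S` is `O(log n)`. -/
theorem stmt7 : ∃ C : ℝ, 0 < C ∧ ∀ n : ℕ, 2 ≤ n → ∀ t t' : LTree,
    labels t = Multiset.range (n + 1) → labels t' = Multiset.range (n + 1) →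
    ∃ k : ℕ, (k : ℝ) ≤ C * Real.log n ∧
      ∃ f : ℕ → LTree, f 0 = t ∧ f k = t' ∧ ∀ i < k, SimMove (f i) (f (i + 1)) := by
  refine ⟨200, by norm_num, fun n hn t t' ht ht' =>
    ⟨57 * (Nat.log 2 n + 1), natLog_two_add_one_le hn, ?_⟩⟩
  exact (iter_of_labels_eq_range (Nat.lt_pow_succ_log_self one_lt_two n) ht ht').exists_chain
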